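/- Fix an integer n ≥ 2 and positive real numbers a(k,j) > 0 for k ∈ {1,…,n}, j ≥ 1, and assume there is a constant C > 0 with |log a(k,j)| ≤ C for all k, j. Define p(k,j) = ( a(k,1)·a(k,2)⋯a(k,j) )², and set D_{q+1} = ∏_{j=1}^{q} s_j for q ≥ 1. Then lim_{q→∞} (log D_{q+1})/(q·n^q) = 2 · Σ_{k=1}^n Σ_{j=1}^∞ (log a(k,j)) / n^j, the inner series converging absolutely. -/

import Mathlib

open Filter

/-- The weight `t(w)` of a word `w` over the alphabet `Fin n`: if
`w = i₁^{j₁} i₂^{j₂} ⋯ i_m^{j_m}` is the run decomposition of `w`, then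
`t(w) = ∏_t p (i_t) (j_t)`. -/
noncomputable def runProd {n : ℕ} (p : Fin n → ℕ → ℝ) (w : List (Fin n)) : ℝ :=
  ((w.splitBy (· == ·)).map (fun r =>
    match r with
    | [] => 1
    | a :: t => p a (t.length + 1))).prod

/-- `sWord n p q = ∏_w t(w)`, the product over all `n^q` words `w` of length `q`. -/
noncomputable def sWord (n : ℕ) (p : Fin n → ℕ → ℝ) (q : ℕ) : ℝ :=
  ∏ f : Fin q → Fin n, runProd p (List.ofFn f)

/-!
Prepending a letter `i` to a word `w` lengthens the block of `i`s at the beginning of `w`, of length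
`ℓ` say, so it multiplies `t(w)` by `p(i,ℓ+1)/p(i,ℓ)`, with the convention `p(i,0) = 1`. Among the
words of length at most `q`, exactly `n^(q-j)` begin with a block of exactly `j ≤ q` letters `i`,
because `1 + ∑_{m<r} (n-1) n^m = n^r` words of length at most `r` do not begin with `i`. Hence
`T_q = log ∏_{m≤q} s_m` satisfies `T_{q+1} = n T_q + ∑_i ∑_{j≤q} n^(q-j) log (p(i,j+1)/p(i,j))`, so
`T_q / n^q` is a sum of `q` partial sums of the limiting series, and `T_q / (q n^q)` is their Cesàro
mean.
-/

lemma sum_ofFn_succ {α M : Type*} [Fintype α] [AddCommMonoid M] (F : List α → M)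
    (q : ℕ) :
    ∑ f : Fin (q + 1) → α, F (List.ofFn f) = ∑ i, ∑ f : Fin q → α, F (i :: List.ofFn f) := by
  rw [← (Fin.consEquiv fun _ => α).sum_comp, Fintype.sum_prod_type]
  simp [Fin.consEquiv, List.ofFn_succ]

section LeadingRun

variable {α : Type*} [DecidableEq α]

/-- The length of the (possibly empty) block of letters `i` at the beginning of `w`. -/
def leadingRun (i : α) (w : List α) : ℕ :=
  (w.takeWhile (· == i)).length

@[simp]
lemma leadingRun_nil (i : α) : leadingRun i [] = 0 := rfl

@[simp]
lemma leadingRun_cons_self (i : α) (w : List α) :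
    leadingRun i (i :: w) = leadingRun i w + 1 := by
  simp [leadingRun]

lemma leadingRun_cons_of_ne {i b : α} (h : b ≠ i) (w : List α) : leadingRun i (b :: w) = 0 := by
  simp [leadingRun, h]

lemma replicate_leadingRun_append_dropWhile (i : α) (w : List α) :
    List.replicate (leadingRun i w) i ++ w.dropWhile (· == i) = w := by
  have htake : w.takeWhile (· == i) = List.replicate (leadingRun i w) i :=
    List.eq_replicate_length.2 fun _ hb =>
      eq_of_beq (List.mem_takeWhile_imp (p := (· == i)) hb)
  rw [← htake, List.takeWhile_append_dropWhile]

variable [Fintype α] {R : Type*} [Ring R]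

lemma sum_leadingRun_succ (i : α) (g : ℕ → R) (q : ℕ) :
    ∑ f : Fin (q + 1) → α, g (leadingRun i (List.ofFn f)) =
      ∑ f : Fin q → α, g (leadingRun i (List.ofFn f) + 1) +
        ((Fintype.card α : R) - 1) * (Fintype.card α : R) ^ q * g 0 := by
  have hne : ∀ b ∈ Finset.univ.erase i,
      ∑ f : Fin q → α, g (leadingRun i (b :: List.ofFn f)) = (Fintype.card α : R) ^ q * g 0 :=
    fun b hb => by simp [leadingRun_cons_of_ne (Finset.ne_of_mem_erase hb)]
  rw [sum_ofFn_succ fun w => g (leadingRun i w), ← Finset.add_sum_erase _ _ (Finset.mem_univ i),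
    Finset.sum_congr rfl hne]
  have hcard : 1 ≤ Fintype.card α := Fintype.card_pos_iff.2 ⟨i⟩
  simp [Finset.card_erase_of_mem, Nat.cast_sub hcard, mul_assoc]

lemma sum_range_sum_leadingRun (i : α) (g : ℕ → R) (q : ℕ) :
    ∑ m ∈ Finset.range (q + 1), ∑ f : Fin m → α, g (leadingRun i (List.ofFn f)) =
      ∑ j ∈ Finset.range (q + 1), (Fintype.card α : R) ^ (q - j) * g j := by
  induction q generalizing g with
  | zero => simp
  | succ q ih =>
    rw [Finset.sum_range_succ', Finset.sum_congr rfl fun m _ => sum_leadingRun_succ i g m,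
      Finset.sum_add_distrib, ih fun j => g (j + 1), ← Finset.sum_mul, ← Finset.mul_sum,
      mul_geom_sum, Finset.sum_range_succ' _ (q + 1)]
    simp [sub_mul, add_assoc]

end LeadingRun

section RunProd

variable {n : ℕ} {p : Fin n → ℕ → ℝ}

@[simp]
lemma runProd_nil : runProd p [] = 1 := by
  simp [runProd]

lemma runProd_replicate_append {i : Fin n} (hp0 : p i 0 = 1) (c : ℕ) {v : List (Fin n)}
    (hv : ∀ x ∈ v.head?, x ≠ i) :
    runProd p (List.replicate c i ++ v) = p i c * runProd p v := by
  cases c with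
  | zero => simp [hp0]
  | succ c =>
    have hsplit : (List.replicate (c + 1) i ++ v).splitBy (· == ·) =
        List.replicate (c + 1) i :: v.splitBy (· == ·) := by
      rw [List.splitBy_append fun x hx y hy => ?_, List.splitBy_of_isChain (by simp)
        (List.isChain_replicate_of_rel _ (by simp)), List.singleton_append]
      obtain rfl : x = i := List.eq_of_mem_replicate (List.mem_of_mem_getLast? hx)
      exact beq_false_of_ne (hv y hy).symm
    rw [runProd, hsplit, List.map_cons, List.prod_cons]
    simp [runProd, List.replicate_succ]

lemma runProd_eq_mul_dropWhile {i : Fin n} (hp0 : p i 0 = 1) (w : List (Fin n)) :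
    runProd p w = p i (leadingRun i w) * runProd p (w.dropWhile (· == i)) := by
  conv_lhs => rw [← replicate_leadingRun_append_dropWhile i w]
  refine runProd_replicate_append hp0 _ fun x hx => ?_
  have hhead := List.head?_dropWhile_not (· == i) w
  rw [Option.mem_def.1 hx] at hhead
  simpa using hhead

lemma runProd_pos (hp : ∀ k j, 0 < p k j) (w : List (Fin n)) : 0 < runProd p w := by
  refine List.prod_pos fun x hx => ?_
  obtain ⟨r, -, rfl⟩ := List.mem_map.1 hx
  cases r with
  | nil => exact one_pos
  | cons k t => exact hp k _

lemma log_runProd_cons (hp : ∀ k j, 0 < p k j) {i : Fin n} (hp0 : p i 0 = 1)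
    (w : List (Fin n)) :
    Real.log (runProd p (i :: w)) = Real.log (runProd p w) +
      (Real.log (p i (leadingRun i w + 1)) - Real.log (p i (leadingRun i w))) := by
  have hrest := (runProd_pos hp (w.dropWhile (· == i))).ne'
  rw [runProd_eq_mul_dropWhile hp0 (i :: w), runProd_eq_mul_dropWhile hp0 w,
    leadingRun_cons_self, List.dropWhile_cons_of_pos (p := (· == i)) (beq_self_eq_true i),
    Real.log_mul (hp _ _).ne' hrest, Real.log_mul (hp _ _).ne' hrest]
  ring

end RunProd

section SWord

variable {n : ℕ} {p : Fin n → ℕ → ℝ}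

@[simp]
lemma sWord_zero : sWord n p 0 = 1 := by
  simp [sWord]

lemma sWord_pos (hp : ∀ k j, 0 < p k j) (q : ℕ) : 0 < sWord n p q :=
  Finset.prod_pos fun _ _ => runProd_pos hp _

lemma log_prod_sWord (hp : ∀ k j, 0 < p k j) (q : ℕ) :
    Real.log (∏ m ∈ Finset.Icc 1 q, sWord n p m) =
      ∑ m ∈ Finset.range (q + 1), Real.log (sWord n p m) := by
  rw [Real.log_prod fun m _ => (sWord_pos hp m).ne', Finset.range_eq_Ico,
    Finset.sum_eq_sum_Ico_succ_bot q.succ_pos, sWord_zero, Real.log_one, zero_add]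
  rfl

lemma log_sWord_succ (hp : ∀ k j, 0 < p k j) (hp0 : ∀ k, p k 0 = 1) (q : ℕ) :
    Real.log (sWord n p (q + 1)) = n * Real.log (sWord n p q) +
      ∑ i, ∑ f : Fin q → Fin n, (Real.log (p i (leadingRun i (List.ofFn f) + 1)) -
        Real.log (p i (leadingRun i (List.ofFn f)))) := by
  have hlog (m : ℕ) : Real.log (sWord n p m) =
      ∑ f : Fin m → Fin n, Real.log (runProd p (List.ofFn f)) :=
    Real.log_prod fun _ _ => (runProd_pos hp _).ne'
  rw [hlog, hlog, sum_ofFn_succ fun w => Real.log (runProd p w)]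
  simp_rw [log_runProd_cons hp (hp0 _), Finset.sum_add_distrib]
  simp

lemma sum_log_sWord_succ (hp : ∀ k j, 0 < p k j) (hp0 : ∀ k, p k 0 = 1) (q : ℕ) :
    ∑ m ∈ Finset.range (q + 2), Real.log (sWord n p m) =
      n * ∑ m ∈ Finset.range (q + 1), Real.log (sWord n p m) +
        ∑ i, ∑ j ∈ Finset.range (q + 1),
          (n : ℝ) ^ (q - j) * (Real.log (p i (j + 1)) - Real.log (p i j)) := by
  have hcount (i : Fin n) := sum_range_sum_leadingRun i
    (fun j => Real.log (p i (j + 1)) - Real.log (p i j)) q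
  simp only [Fintype.card_fin] at hcount
  simp_rw [← hcount]
  rw [Finset.sum_range_succ', sWord_zero, Real.log_one, add_zero,
    Finset.sum_congr rfl fun m _ => log_sWord_succ hp hp0 m, Finset.sum_add_distrib,
    ← Finset.mul_sum, Finset.sum_comm]

lemma sum_log_sWord_div_pow (hn : n ≠ 0) (hp : ∀ k j, 0 < p k j) (hp0 : ∀ k, p k 0 = 1)
    (q : ℕ) :
    (∑ m ∈ Finset.range (q + 1), Real.log (sWord n p m)) / (n : ℝ) ^ q =
      ∑ m ∈ Finset.range q, ∑ i, ∑ j ∈ Finset.range (m + 1),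
        (Real.log (p i (j + 1)) - Real.log (p i j)) / (n : ℝ) ^ (j + 1) := by
  have hn' : (n : ℝ) ≠ 0 := Nat.cast_ne_zero.2 hn
  induction q with
  | zero => simp
  | succ q ih =>
    rw [sum_log_sWord_succ hp hp0, add_div, pow_succ', mul_div_mul_left _ _ hn', ih,
      Finset.sum_range_succ _ q, ← pow_succ']
    simp_rw [Finset.sum_div]
    congr 1
    refine Finset.sum_congr rfl fun i _ => Finset.sum_congr rfl fun j hj => ?_
    have hexp : q + 1 = (q - j) + (j + 1) := by grind
    rw [hexp, pow_add, mul_div_mul_left _ _ (pow_ne_zero _ hn')]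

theorem tendsto_log_prod_sWord_div (hn : n ≠ 0) (hp : ∀ k j, 0 < p k j)
    (hp0 : ∀ k, p k 0 = 1) {σ : Fin n → ℝ}
    (hσ : ∀ k, Tendsto (fun q : ℕ => ∑ j ∈ Finset.range q,
      (Real.log (p k (j + 1)) - Real.log (p k j)) / (n : ℝ) ^ (j + 1)) atTop (nhds (σ k))) :
    Tendsto (fun q : ℕ => Real.log (∏ m ∈ Finset.Icc 1 q, sWord n p m) / (q * (n : ℝ) ^ q))
      atTop (nhds (∑ k, σ k)) := by
  have hpartial := tendsto_finsetSum Finset.univ fun k _ =>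
    (hσ k).comp (tendsto_add_atTop_nat 1)
  refine hpartial.cesaro.congr fun q => ?_
  rw [log_prod_sWord hp, mul_comm (q : ℝ), ← div_div,
    sum_log_sWord_div_pow hn hp hp0, div_eq_inv_mul]
  rfl

end SWord

lemma summable_div_pow_succ_of_abs_le {x : ℝ} (hx : 1 < x) {u : ℕ → ℝ} {C : ℝ}
    (hu : ∀ j, |u j| ≤ C) : Summable fun j : ℕ => u j / x ^ (j + 1) := by
  have hx0 : 0 < x := one_pos.trans hx
  have hgeom : Summable fun j : ℕ => C * x⁻¹ ^ (j + 1) :=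
    ((summable_nat_add_iff 1).2
      (summable_geometric_of_lt_one (by positivity) (inv_lt_one_of_one_lt₀ hx))).mul_left C
  refine hgeom.of_norm_bounded fun j => ?_
  rw [Real.norm_eq_abs, abs_div, abs_of_pos (pow_pos hx0 _), inv_pow, ← div_eq_mul_inv]
  gcongr
  exact hu j

/-- Limits of partial sums, because `HasSum` would force the series to converge absolutely. -/
theorem stmt_14_general (n : ℕ) (hn : n ≠ 0) (a : Fin n → ℕ → ℝ)
    (ha : ∀ k, ∀ j, 1 ≤ j → 0 < a k j)
    (σ : Fin n → ℝ)
    (hσ : ∀ k, Tendsto (fun q : ℕ => ∑ j ∈ Finset.range q,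
      Real.log (a k (j + 1)) / (n : ℝ) ^ (j + 1)) atTop (nhds (σ k)))
    (p : Fin n → ℕ → ℝ)
    (hp : ∀ k j, p k j = (∏ i ∈ Finset.Icc 1 j, a k i) ^ 2)
    (D : ℕ → ℝ)
    (hD : ∀ q, 1 ≤ q → D (q + 1) = ∏ j ∈ Finset.Icc 1 q, sWord n p j) :
    Tendsto (fun q : ℕ => Real.log (D (q + 1)) / (q * (n : ℝ) ^ q)) atTop
      (nhds (2 * ∑ k, σ k)) := by
  have hp_pos (k j) : 0 < p k j := by
    rw [hp]
    exact pow_pos (Finset.prod_pos fun i hi => ha k i (Finset.mem_Icc.1 hi).1) 2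
  have hp0 (k) : p k 0 = 1 := by simp [hp]
  have hincr (k j) : Real.log (p k (j + 1)) - Real.log (p k j) = 2 * Real.log (a k (j + 1)) := by
    have hstep : p k (j + 1) = p k j * a k (j + 1) ^ 2 := by
      rw [hp, hp, Finset.prod_Icc_succ_top (by omega), mul_pow]
    rw [hstep, Real.log_mul (hp_pos k j).ne' (pow_pos (ha k _ j.succ_pos) 2).ne', Real.log_pow]
    push_cast
    ring
  have hlim : Tendsto (fun q : ℕ => Real.log (∏ m ∈ Finset.Icc 1 q, sWord n p m) /
      (q * (n : ℝ) ^ q)) atTop (nhds (∑ k, 2 * σ k)) := by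
    refine tendsto_log_prod_sWord_div hn hp_pos hp0 fun k => ?_
    simpa only [hincr, mul_div_assoc, ← Finset.mul_sum] using (hσ k).const_mul 2
  rw [Finset.mul_sum]
  refine hlim.congr' ?_
  filter_upwards [eventually_ge_atTop 1] with q hq
  rw [hD q hq]

/-- For positive reals `a(k,j)` with `|log a(k,j)| ≤ C`, set
`p(k,j) = (a(k,1)⋯a(k,j))²` and `D_{q+1} = ∏_{j=1}^q s_j`. Then each series
`Σ_{j=1}^∞ (log a(k,j))/n^j` converges absolutely and
`lim_{q→∞} (log D_{q+1})/(q·n^q) = 2·Σ_{k=1}^n Σ_{j=1}^∞ (log a(k,j))/n^j`. -/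
theorem stmt_14 (n : ℕ) (hn : 2 ≤ n) (a : Fin n → ℕ → ℝ)
    (ha : ∀ k, ∀ j, 1 ≤ j → 0 < a k j)
    (C : ℝ) (hC : 0 < C)
    (hbound : ∀ k, ∀ j, 1 ≤ j → |Real.log (a k j)| ≤ C)
    (p : Fin n → ℕ → ℝ)
    (hp : ∀ k j, p k j = (∏ i ∈ Finset.Icc 1 j, a k i) ^ 2)
    (D : ℕ → ℝ)
    (hD : ∀ q, 1 ≤ q → D (q + 1) = ∏ j ∈ Finset.Icc 1 q, sWord n p j) :
    (∀ k, Summable (fun j : ℕ => |Real.log (a k (j + 1))| / (n : ℝ) ^ (j + 1))) ∧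
    Tendsto (fun q : ℕ => Real.log (D (q + 1)) / (q * (n : ℝ) ^ q)) atTop
      (nhds (2 * ∑ k, ∑' j : ℕ, Real.log (a k (j + 1)) / (n : ℝ) ^ (j + 1))) := by
 
  have hsum (k : Fin n) : Summable fun j : ℕ => Real.log (a k (j + 1)) / (n : ℝ) ^ (j + 1) :=
    summable_div_pow_succ_of_abs_le (mod_cast hn) fun j => hbound k (j + 1) j.succ_pos
  exact ⟨fun k => by simpa [abs_div] using (hsum k).abs,
    stmt_14_general n (by omega) a ha _ (fun k => (hsum k).hasSum.tendsto_sum_nat) p hp D hD⟩
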